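/- Let H be an atomic cancellative monoid. The following statements are equivalent: (1) H is permutably factorial; (2) t_p(H) = 0 and every almost prime-like element of H is prime-like; (3) t_p(H, Z_p(H)) = 0 and every almost prime-like element of H is prime-like. -/

import Mathlib

def MAtom {H : Type*} [Monoid H] (u : H) : Prop :=
  ¬ IsUnit u ∧ ∀ a b : H, u = a * b → IsUnit a ∨ IsUnit b

def TAssoc {H : Type*} [Monoid H] (a b : H) : Prop :=
  ∃ ε η : Hˣ, b = (ε : H) * a * (η : H)

def Atomic (H : Type*) [Monoid H] : Prop :=
  ∀ a : H, ¬ IsUnit a → ∃ l : List H, l ≠ [] ∧ (∀ u ∈ l, MAtom u) ∧ a = l.prod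

def T1Cond {H T : Type*} [Monoid H] [Monoid T] (φ : H →* T) : Prop :=
  (∀ t : T, ∃ (ε η : Tˣ) (a : H), t = (ε : T) * φ a * (η : T)) ∧
    ∀ a : H, IsUnit (φ a) ↔ IsUnit a

def IsTransferHom {H T : Type*} [Monoid H] [Monoid T] (φ : H →* T) : Prop :=
  T1Cond φ ∧
    ∀ (a : H) (b₁ b₂ : T), φ a = b₁ * b₂ →
      ∃ (a₁ a₂ : H) (ε : Tˣ), a = a₁ * a₂ ∧ φ a₁ = b₁ * ((ε⁻¹ : Tˣ) : T) ∧ φ a₂ = (ε : T) * b₂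

def IsWeakTransferHom {H T : Type*} [Monoid H] [Monoid T] (φ : H →* T) : Prop :=
  T1Cond φ ∧
    ∀ (a : H) (n : ℕ), 0 < n → ∀ v : Fin n → T, (∀ i, MAtom (v i)) →
      φ a = (List.ofFn v).prod →
      ∃ (u : Fin n → H) (σ : Equiv.Perm (Fin n)),
        (∀ i, MAtom (u i)) ∧ a = (List.ofFn u).prod ∧ ∀ i, TAssoc (φ (u i)) (v (σ i))

def IsIsoatomic {H T : Type*} [Monoid H] [Monoid T] (φ : H →* T) : Prop :=
  ∀ u v : H, MAtom u → MAtom v → TAssoc (φ u) (φ v) → TAssoc u v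

def lengthsOf {H : Type*} [Monoid H] (a : H) : Set ℕ :=
  {n | (n = 0 ∧ IsUnit a) ∨
    ∃ l : List H, l ≠ [] ∧ (∀ u ∈ l, MAtom u) ∧ a = l.prod ∧ l.length = n}
structure RF (H : Type*) [Monoid H] where
  u : Hˣ
  l : List H

namespace RF

variable {H : Type*} [Monoid H]

def IsRigid (z : RF H) : Prop := ∀ x ∈ z.l, MAtom x

def prod (z : RF H) : H := (z.u : H) * z.l.prod

def len (z : RF H) : ℕ := z.l.length

def mul (z w : RF H) : RF H :=
  match z.l with
  | [] => ⟨z.u * w.u, w.l⟩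
  | a :: as =>
      ⟨z.u, ((a :: as).dropLast ++
        [(a :: as).getLast (List.cons_ne_nil a as) * (w.u : H)]) ++ w.l⟩

end RF

/-- The equivalence relation on rigid factorization data: same length, and the
atoms agree up to an interpolating family of units `δ`, with the unit part
absorbing `δ 0` and `δ` becoming trivial after the last atom. -/
def RFEq {H : Type*} [Monoid H] (z w : RF H) : Prop :=
  ∃ δ : ℕ → Hˣ,
    z.l.length = w.l.length ∧ δ z.l.length = 1 ∧ w.u = z.u * (δ 0)⁻¹ ∧
    ∀ (i : ℕ) (hi : i < z.l.length) (hi' : i < w.l.length),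
      w.l.get ⟨i, hi'⟩ = ((δ i : H)) * z.l.get ⟨i, hi⟩ * (((δ (i + 1))⁻¹ : Hˣ) : H)

/-- A distance on the rigid factorizations of `H` (axioms (D1)-(D5); (D1) is stated
in the strong form saying the distance vanishes on equivalent rigid factorizations,
which encodes well-definedness on the category of rigid factorizations). -/
structure IsDistance (H : Type*) [Monoid H] (d : RF H → RF H → ℕ) : Prop where
  d_eq : ∀ z w : RF H, z.IsRigid → w.IsRigid → RFEq z w → d z w = 0
  d_symm : ∀ z w : RF H, z.IsRigid → w.IsRigid → z.prod = w.prod → d z w = d w z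
  d_tri : ∀ z w v : RF H, z.IsRigid → w.IsRigid → v.IsRigid →
    z.prod = w.prod → w.prod = v.prod → d z v ≤ d z w + d w v
  d_mul_left : ∀ x z w : RF H, x.IsRigid → z.IsRigid → w.IsRigid → z.prod = w.prod →
    d (x.mul z) (x.mul w) = d z w
  d_mul_right : ∀ y z w : RF H, y.IsRigid → z.IsRigid → w.IsRigid → z.prod = w.prod →
    d (z.mul y) (w.mul y) = d z w
  d_len : ∀ z w : RF H, z.IsRigid → w.IsRigid → z.prod = w.prod →
    (z.len - w.len ≤ d z w ∧ w.len - z.len ≤ d z w) ∧ d z w ≤ max (max z.len w.len) 1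

/-- An `N`-chain of rigid factorizations of `a` between `z` and `w`, in distance `d`. -/
def IsNChain {H : Type*} [Monoid H] (d : RF H → RF H → ℕ) (a : H) (N : ℕ∞)
    (z w : RF H) : Prop :=
  ∃ (n : ℕ) (c : ℕ → RF H), c 0 = z ∧ c n = w ∧
    (∀ i ≤ n, (c i).IsRigid ∧ (c i).prod = a) ∧
    ∀ i < n, (d (c i) (c (i + 1)) : ℕ∞) ≤ N

/-- A monotone `N`-chain: in addition the lengths are non-decreasing or non-increasing. -/
def IsMonNChain {H : Type*} [Monoid H] (d : RF H → RF H → ℕ) (a : H) (N : ℕ∞)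
    (z w : RF H) : Prop :=
  ∃ (n : ℕ) (c : ℕ → RF H), c 0 = z ∧ c n = w ∧
    (∀ i ≤ n, (c i).IsRigid ∧ (c i).prod = a) ∧
    (∀ i < n, (d (c i) (c (i + 1)) : ℕ∞) ≤ N) ∧
    ((∀ i j, i ≤ j → j ≤ n → (c i).len ≤ (c j).len) ∨
      (∀ i j, i ≤ j → j ≤ n → (c j).len ≤ (c i).len))

/-- The catenary degree of `a` in distance `d`. -/
noncomputable def catenaryDeg {H : Type*} [Monoid H] (d : RF H → RF H → ℕ) (a : H) : ℕ∞ :=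
  sInf {N : ℕ∞ | ∀ z w : RF H, z.IsRigid → w.IsRigid → z.prod = a → w.prod = a →
    IsNChain d a N z w}

/-- The monotone catenary degree of `a` in distance `d`. -/
noncomputable def catenaryDegMon {H : Type*} [Monoid H] (d : RF H → RF H → ℕ) (a : H) : ℕ∞ :=
  sInf {N : ℕ∞ | ∀ z w : RF H, z.IsRigid → w.IsRigid → z.prod = a → w.prod = a →
    IsMonNChain d a N z w}

/-- The set of distances of a set of naturals. -/
def DeltaSet (L : Set ℕ) : Set ℕ :=
  {d | 0 < d ∧ ∃ l ∈ L, l + d ∈ L ∧ ∀ m ∈ L, l < m → m < l + d → False}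
/-- Two-sided associativity is an equivalence relation. -/
def assocSetoid (H : Type*) [Monoid H] : Setoid H where
  r := TAssoc
  iseqv := by
    constructor
    · intro a; exact ⟨1, 1, by simp⟩
    · rintro a b ⟨ε, η, rfl⟩
      exact ⟨ε⁻¹, η⁻¹, by simp [mul_assoc]⟩
    · rintro a b c ⟨ε, η, rfl⟩ ⟨ε', η', rfl⟩
      exact ⟨ε' * ε, η * η', by simp [mul_assoc]⟩

/-- Associativity classes of elements of `H`. -/
def AClass (H : Type*) [Monoid H] := Quotient (assocSetoid H)

def mkCls {H : Type*} [Monoid H] (a : H) : AClass H := Quotient.mk (assocSetoid H) a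

/-- The distance between two multisets: `max {card s - card (s ∩ t), card t - card (s ∩ t)}`. -/
noncomputable def mdist {α : Type*} (s t : Multiset α) : ℕ :=
  letI := Classical.decEq α
  max (Multiset.card s - Multiset.card (s ∩ t)) (Multiset.card t - Multiset.card (s ∩ t))

/-- The multiset of associativity classes of the entries of a list. -/
def clsList {H : Type*} [Monoid H] (l : List H) : Multiset (AClass H) :=
  ((l.map mkCls : List (AClass H)) : Multiset (AClass H))

/-- The permutable distance between two rigid factorizations. -/
noncomputable def dpRF {H : Type*} [Monoid H] (z w : RF H) : ℕ :=
  mdist (clsList z.l) (clsList w.l)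

/-- The permutable catenary degree of an element. -/
noncomputable def cpDeg {H : Type*} [Monoid H] (a : H) : ℕ∞ :=
  sInf {N : ℕ∞ | ∀ z w : RF H, z.IsRigid → w.IsRigid → z.prod = a → w.prod = a →
    ∃ (n : ℕ) (c : ℕ → RF H), c 0 = z ∧ c n = w ∧
      (∀ i ≤ n, (c i).IsRigid ∧ (c i).prod = a) ∧
      ∀ i < n, (dpRF (c i) (c (i + 1)) : ℕ∞) ≤ N}

/-- The permutable catenary degree of a monoid. -/
noncomputable def cpMon (H : Type*) [Monoid H] : ℕ∞ := ⨆ a : H, cpDeg a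

/-- The map induced on rigid factorization data by a monoid homomorphism. -/
def mapRF {H T : Type*} [Monoid H] [Monoid T] (φ : H →* T) (z : RF H) : RF T :=
  ⟨Units.map φ z.u, z.l.map φ⟩
/-- Divisibility up to permutation: `a ∣_p b`. -/
def dvdP {H : Type*} [Monoid H] (a b : H) : Prop :=
  ∃ (k l : ℕ) (u : Fin k → H) (v : Fin l → H),
    (∀ i, MAtom (u i)) ∧ (∀ j, MAtom (v j)) ∧
    TAssoc a (List.ofFn u).prod ∧ TAssoc b (List.ofFn v).prod ∧
    ∃ σ : Fin k ↪ Fin l, ∀ i, TAssoc (u i) (v (σ i))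

/-- An almost prime-like element (with respect to `∣_p`). -/
def APLike {H : Type*} [Monoid H] (q : H) : Prop :=
  ¬ IsUnit q ∧ ∀ a b : H, dvdP q (a * b) → dvdP q a ∨ dvdP q b

/-- The number of entries of `l` associated to `q`. -/
noncomputable def countAssoc {H : Type*} [Monoid H] (l : List H) (q : H) : ℕ :=
  Nat.card {i : Fin l.length // TAssoc (l.get i) q}

/-- The `q`-adic valuation of `a`: the set of numbers of occurrences (up to associativity)
of `q` in factorizations of `a` into atoms. -/
def Vq {H : Type*} [Monoid H] (q a : H) : Set ℕ :=
  {n | ∃ l : List H, (∀ u ∈ l, MAtom u) ∧ TAssoc a l.prod ∧ countAssoc l q = n}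

/-- A prime-like element: almost prime-like, with singleton `q`-adic valuations. -/
def PrimeLike {H : Type*} [Monoid H] (q : H) : Prop :=
  APLike q ∧ ∀ a : H, ∃ n : ℕ, Vq q a = {n}

/-- `H` is permutably factorial. -/
def PermutablyFactorial (H : Type*) [Monoid H] : Prop :=
  Atomic H ∧
    ∀ (k l : ℕ) (u : Fin k → H) (v : Fin l → H),
      (∀ i, MAtom (u i)) → (∀ j, MAtom (v j)) →
      (List.ofFn u).prod = (List.ofFn v).prod →
      ∃ σ : Fin k ≃ Fin l, ∀ i, TAssoc (u i) (v (σ i))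
/-- Permutable factorizations of `a`, represented as multisets of associativity
classes of atoms realizing `a` (up to a unit). -/
def ZpSet {H : Type*} [Monoid H] (a : H) : Set (Multiset (AClass H)) :=
  {s | ∃ (ε : Hˣ) (l : List H), (∀ u ∈ l, MAtom u) ∧ a = (ε : H) * l.prod ∧ s = clsList l}

/-- The permutable tame degree `t_p(a, x)`. -/
noncomputable def tpEl {H : Type*} [Monoid H] (a : H) (x : Multiset (AClass H)) : ℕ∞ :=
  sInf {N : ℕ∞ | (∃ z₀ ∈ ZpSet a, x ≤ z₀) →
    ∀ z ∈ ZpSet a, ∃ z' ∈ ZpSet a, x ≤ z' ∧ (mdist z z' : ℕ∞) ≤ N}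

/-- The permutable tame degree `t_p(H)`. -/
noncomputable def tpMon (H : Type*) [Monoid H] : ℕ∞ :=
  ⨆ (u : H) (_ : MAtom u) (a : H), tpEl a {mkCls u}

/-- The permutable tame degree `t_p(H, Z_p(H))`. -/
noncomputable def tpZpMon (H : Type*) [Monoid H] : ℕ∞ :=
  ⨆ (a : H) (x : Multiset (AClass H)) (_ : ∃ b : H, x ∈ ZpSet b), tpEl a x

/-- The map induced on associativity classes by a monoid homomorphism. -/
def mapCls {H T : Type*} [Monoid H] [Monoid T] (φ : H →* T) : AClass H → AClass T :=
  Quotient.lift (fun a => mkCls (φ a)) (by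
    rintro a b ⟨ε, η, rfl⟩
    exact Quotient.sound ⟨Units.map φ ε, Units.map φ η, by simp⟩)

theorem mkCls_eq {H : Type*} [Monoid H] {a b : H} : mkCls a = mkCls b ↔ TAssoc a b := by
  exact Quotient.eq (r := assocSetoid H)

theorem unit_left {H : Type*} [CancelMonoid H] {a b : H} (h : IsUnit (a * b)) : IsUnit a := by
  obtain ⟨u, hu⟩ := h
  have h1 : a * (b * ((u⁻¹ : Hˣ) : H)) = 1 := by rw [← mul_assoc, ← hu]; simp
  have h2 : (b * ((u⁻¹ : Hˣ) : H)) * a = 1 := by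
    apply mul_left_cancel (a := a)
    rw [← mul_assoc, h1]; simp
  exact ⟨⟨a, _, h1, h2⟩, rfl⟩

theorem unit_right {H : Type*} [CancelMonoid H] {a b : H} (h : IsUnit (a * b)) : IsUnit b := by
  obtain ⟨u, hu⟩ := unit_left h
  rw [← hu] at h
  simpa using h

theorem MAtom.tassoc {H : Type*} [Monoid H] {a b : H} (h : MAtom a) (hab : TAssoc a b) :
    MAtom b := by
  obtain ⟨ε, η, rfl⟩ := hab
  refine ⟨fun hu => h.1 (by simpa using hu), fun x y hxy => ?_⟩
  have := h.2 (((ε⁻¹ : Hˣ) : H) * x) (y * ((η⁻¹ : Hˣ) : H)) (by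
    have : ((ε⁻¹ : Hˣ) : H) * x * (y * ((η⁻¹ : Hˣ) : H))
      = ((ε⁻¹ : Hˣ) : H) * (x * y) * ((η⁻¹ : Hˣ) : H) := by simp only [mul_assoc]
    rw [this, ← hxy]; simp [mul_assoc])
  simpa using this

theorem clsList_append {H : Type*} [Monoid H] (l m : List H) :
    clsList (l ++ m) = clsList l + clsList m := by
  simp [clsList]

theorem absorb_right {H : Type*} [Monoid H] (l : List H) (hl : ∀ u ∈ l, MAtom u) (η : Hˣ) :
    ∃ (ε : Hˣ) (l' : List H), (∀ u ∈ l', MAtom u) ∧ l.prod * (η : H) = (ε : H) * l'.prod ∧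
      clsList l' = clsList l := by
  rcases List.eq_nil_or_concat l with rfl | ⟨t, x, rfl⟩
  · exact ⟨η, [], by simp, by simp, rfl⟩
  · have hx : TAssoc x (x * (η : H)) := ⟨1, η, by simp⟩
    refine ⟨1, t ++ [x * (η : H)], ?_, by simp [mul_assoc], ?_⟩
    · intro u hu
      rcases List.mem_append.1 hu with h | h
      · exact hl u (by simp [h])
      · rw [List.mem_singleton.1 h]
        exact (hl x (by simp)).tassoc hx
    · simp only [List.concat_eq_append, clsList_append]
      congr 1
      simp [clsList, mkCls_eq.2 hx]

theorem mem_ZpSet_iff {H : Type*} [Monoid H] {a : H} {s : Multiset (AClass H)} :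
    s ∈ ZpSet a ↔ ∃ l : List H, (∀ u ∈ l, MAtom u) ∧ TAssoc a l.prod ∧ s = clsList l := by
  constructor
  · rintro ⟨ε, l, hl, rfl, rfl⟩
    exact ⟨l, hl, ⟨ε⁻¹, 1, by simp⟩, rfl⟩
  · rintro ⟨l, hl, ⟨ε, η, h⟩, rfl⟩
    obtain ⟨δ, l', hl', h1, h2⟩ := absorb_right l hl η⁻¹
    refine ⟨ε⁻¹ * δ, l', hl', ?_, h2.symm⟩
    rw [Units.val_mul, mul_assoc, ← h1, h]
    simp [mul_assoc]

theorem ZpSet_add {H : Type*} [Monoid H] {a b : H} {s t : Multiset (AClass H)}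
    (hs : s ∈ ZpSet a) (ht : t ∈ ZpSet b) : s + t ∈ ZpSet (a * b) := by
  obtain ⟨ε, l, hl, rfl, rfl⟩ := hs
  obtain ⟨δ, m, hm, rfl, rfl⟩ := ht
  obtain ⟨γ, l', hl', h1, h2⟩ := absorb_right l hl δ
  refine ⟨ε * γ, l' ++ m, ?_, ?_, by rw [clsList_append, h2]⟩
  · intro u hu
    rcases List.mem_append.1 hu with h | h
    · exact hl' u h
    · exact hm u h
  · rw [List.prod_append, Units.val_mul, ← mul_assoc, ← mul_assoc, mul_assoc (ε : H) l.prod,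
      h1]
    simp only [mul_assoc]

theorem ZpSet_nonempty {H : Type*} [Monoid H] (hH : Atomic H) (a : H) : ∃ s, s ∈ ZpSet a := by
  by_cases ha : IsUnit a
  · obtain ⟨u, rfl⟩ := ha
    exact ⟨clsList [], u, [], by simp, by simp, rfl⟩
  · obtain ⟨l, -, h1, h2⟩ := hH a ha
    exact ⟨clsList l, 1, l, h1, by simpa using h2, rfl⟩

theorem clsList_ofFn {H : Type*} [Monoid H] {k : ℕ} (u : Fin k → H) :
    clsList (List.ofFn u) = Multiset.map (fun i => mkCls (u i)) Finset.univ.val := by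
  rw [Fin.univ_val_map]
  simp [clsList, List.map_ofFn, Function.comp_def]

theorem map_univ_eq {α β γ : Type*} [Fintype α] [Fintype β] (f : α → γ) (g : β → γ) :
    Multiset.map f Finset.univ.val = Multiset.map g Finset.univ.val ↔
      ∃ σ : α ≃ β, ∀ i, f i = g (σ i) := by
  classical
  constructor
  · intro h
    have hc : ∀ c, Nonempty ({i // f i = c} ≃ {j // g j = c}) := by
      intro c
      rw [← Fintype.card_eq, Fintype.card_subtype, Fintype.card_subtype]
      have := congrArg (Multiset.count c) h
      rw [Multiset.count_map, Multiset.count_map] at this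
      simp only [eq_comm (a := c)] at this
      exact this
    let e := fun c => (hc c).some
    refine ⟨((Equiv.sigmaFiberEquiv f).symm.trans (Equiv.sigmaCongrRight e)).trans
      (Equiv.sigmaFiberEquiv g), fun i => ?_⟩
    exact ((e (f i)) ⟨i, rfl⟩).2.symm
  · rintro ⟨σ, hσ⟩
    have h1 : f = g ∘ σ := funext hσ
    have h2 : Multiset.map σ Finset.univ.val = Finset.univ.val :=
      congrArg Finset.val (Finset.map_univ_equiv σ)
    rw [h1, ← Multiset.map_map, h2]

theorem clsList_ofFn_eq {H : Type*} [Monoid H] {k l : ℕ} (u : Fin k → H) (v : Fin l → H) :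
    clsList (List.ofFn u) = clsList (List.ofFn v) ↔
      ∃ σ : Fin k ≃ Fin l, ∀ i, TAssoc (u i) (v (σ i)) := by
  rw [clsList_ofFn, clsList_ofFn, map_univ_eq]
  simp only [mkCls_eq]

theorem count_eq {H : Type*} [Monoid H] [DecidableEq (AClass H)] (l : List H) (q : H) :
    countAssoc l q = (clsList l).count (mkCls q) := by
  classical
  have h : clsList l = Multiset.map (fun i => mkCls (l.get i)) Finset.univ.val := by
    rw [← clsList_ofFn, List.ofFn_get]
  rw [h, Multiset.count_map, countAssoc, Nat.card_eq_fintype_card, Fintype.card_subtype]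
  change Multiset.card (Multiset.filter (fun i => TAssoc (l.get i) q) Finset.univ.val) = _
  congr 1
  apply Multiset.filter_congr
  intro i _
  rw [← mkCls_eq, eq_comm]

theorem mem_Vq_iff {H : Type*} [Monoid H] [DecidableEq (AClass H)] {q a : H} {n : ℕ} :
    n ∈ Vq q a ↔ ∃ s ∈ ZpSet a, s.count (mkCls q) = n := by
  constructor
  · rintro ⟨l, hl, h, rfl⟩
    exact ⟨_, mem_ZpSet_iff.2 ⟨l, hl, h, rfl⟩, (count_eq l q).symm⟩
  · rintro ⟨s, hs, rfl⟩
    obtain ⟨l, hl, h, rfl⟩ := mem_ZpSet_iff.1 hs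
    exact ⟨l, hl, h, count_eq l q⟩

theorem atom_of_prod {H : Type*} [Monoid H] (l : List H) (hl : ∀ u ∈ l, MAtom u)
    (h : MAtom l.prod) : ∃ x ∈ l, TAssoc x l.prod := by
  cases l with
  | nil => exact absurd (by simp) h.1
  | cons x t =>
    rcases h.2 x t.prod (by simp) with h1 | ⟨η, hη⟩
    · exact absurd h1 (hl x (by simp)).1
    · exact ⟨x, by simp, 1, η, by simp [hη]⟩

theorem dvdP_atom_iff {H : Type*} [Monoid H] {q b : H} (hq : MAtom q) :
    dvdP q b ↔ ∃ z ∈ ZpSet b, mkCls q ∈ z := by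
  constructor
  · rintro ⟨k, l, u, v, hu, hv, h1, h2, σ, hσ⟩
    obtain ⟨x, hx, hxq⟩ := atom_of_prod (List.ofFn u) (by simpa [List.mem_ofFn] using hu)
      (hq.tassoc h1)
    obtain ⟨i, rfl⟩ := List.mem_ofFn.1 hx
    refine ⟨clsList (List.ofFn v), mem_ZpSet_iff.2
      ⟨_, by simpa [List.mem_ofFn] using hv, h2, rfl⟩, ?_⟩
    rw [mkCls_eq.2 h1, ← mkCls_eq.2 hxq, mkCls_eq.2 (hσ i), clsList_ofFn]
    exact Multiset.mem_map.2 ⟨σ i, by simp, rfl⟩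
  · rintro ⟨z, hz, hqz⟩
    obtain ⟨l, hl, h, rfl⟩ := mem_ZpSet_iff.1 hz
    have h' : clsList l = Multiset.map (fun i => mkCls (l.get i)) Finset.univ.val := by
      rw [← clsList_ofFn, List.ofFn_get]
    rw [h'] at hqz
    obtain ⟨i, -, hi⟩ := Multiset.mem_map.1 hqz
    refine ⟨1, l.length, fun _ => q, l.get, fun _ => hq, fun j => hl _ (List.get_mem _ _),
      ⟨1, 1, by simp⟩, by rwa [List.ofFn_get], ⟨fun _ => i, fun a b _ => Subsingleton.elim a b⟩,
      fun _ => mkCls_eq.1 hi.symm⟩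

theorem mdist_self {α : Type*} (s : Multiset α) : mdist s s = 0 := by
  classical
  have h : s ∩ s = s := by ext a; simp
  unfold mdist
  convert_to max (Multiset.card s - Multiset.card (s ∩ s))
    (Multiset.card s - Multiset.card (s ∩ s)) = 0
  rw [h]; simp

theorem mdist_eq_zero {α : Type*} {s t : Multiset α} (h : mdist s t = 0) : s = t := by
  classical
  unfold mdist at h
  have h1 := Nat.max_eq_zero_iff.1 h
  have hs := Multiset.eq_of_le_of_card_le (Multiset.inter_le_left (s := s) (t := t))
    (Nat.sub_eq_zero_iff_le.1 (by convert h1.1))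
  have ht := Multiset.eq_of_le_of_card_le (Multiset.inter_le_right (s := s) (t := t))
    (Nat.sub_eq_zero_iff_le.1 (by convert h1.2))
  exact hs.symm.trans ht

theorem tpEl_eq_zero_iff {H : Type*} [Monoid H] {a : H} {x : Multiset (AClass H)} :
    tpEl a x = 0 ↔ ((∃ z₀ ∈ ZpSet a, x ≤ z₀) → ∀ z ∈ ZpSet a, x ≤ z) := by
  constructor
  · intro h h0 z hz
    have h1 : tpEl a x < 1 := by rw [h]; exact zero_lt_one
    obtain ⟨N, hN, hN1⟩ := sInf_lt_iff.1 h1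
    obtain ⟨z', hz', hx, hd⟩ := hN h0 z hz
    have : mdist z z' = 0 := by
      have := lt_of_le_of_lt hd hN1
      have : mdist z z' < 1 := by exact_mod_cast this
      omega
    rwa [mdist_eq_zero this]
  · intro h
    apply le_antisymm _ bot_le
    apply sInf_le
    intro h0 z hz
    exact ⟨z, hz, h h0 z hz, by simp [mdist_self]⟩

theorem prod_isUnit_nil {H : Type*} [CancelMonoid H] {l : List H} (hl : ∀ u ∈ l, MAtom u)
    (h : IsUnit l.prod) : l = [] := by
  cases l with
  | nil => rfl
  | cons x t =>
    rw [List.prod_cons] at h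
    exact absurd (unit_left h) (hl x (by simp)).1

theorem PF_ZpSet {H : Type*} [CancelMonoid H] (h : PermutablyFactorial H) {a : H}
    {s t : Multiset (AClass H)} (hs : s ∈ ZpSet a) (ht : t ∈ ZpSet a) : s = t := by
  obtain ⟨ε, l, hl, h1, rfl⟩ := hs
  obtain ⟨δ, m, hm, h2, rfl⟩ := ht
  have key : l.prod = ((ε⁻¹ * δ : Hˣ) : H) * m.prod := by
    rw [Units.val_mul, mul_assoc, ← h2, h1]; simp
  cases m with
  | nil =>
    rw [prod_isUnit_nil hl (by rw [key]; simp)]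
  | cons x r =>
    have hx : TAssoc x (((ε⁻¹ * δ : Hˣ) : H) * x) := ⟨ε⁻¹ * δ, 1, by simp⟩
    have e : clsList (x :: r) = clsList ((((ε⁻¹ * δ : Hˣ) : H) * x) :: r) := by
      simp only [clsList, List.map_cons, mkCls_eq.2 hx]
    rw [e]
    obtain ⟨σ, hσ⟩ := h.2 _ _ l.get ((((ε⁻¹ * δ : Hˣ) : H) * x) :: r).get
      (fun i => hl _ (List.get_mem _ _))
      (fun i => by
        have := List.get_mem ((((ε⁻¹ * δ : Hˣ) : H) * x) :: r) i
        rcases List.mem_cons.1 this with h | h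
        · rw [h]; exact (hm x (by simp)).tassoc hx
        · exact hm _ (List.mem_cons_of_mem _ h))
      (by rw [List.ofFn_get, List.ofFn_get, key]; simp [mul_assoc])
    have := (clsList_ofFn_eq _ _).2 ⟨σ, hσ⟩
    rwa [List.ofFn_get, List.ofFn_get] at this

theorem PF_of_tpMon {H : Type*} [CancelMonoid H] (hH : Atomic H) (h0 : tpMon H = 0)
    (hp : ∀ q : H, APLike q → PrimeLike q) : PermutablyFactorial H := by
  classical
  have ht : ∀ u : H, MAtom u → ∀ a : H, tpEl a {mkCls u} = 0 := by
    intro u hu a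
    have : tpEl a {mkCls u} ≤ tpMon H :=
      le_iSup_of_le u (le_iSup_of_le hu (le_iSup (fun a => tpEl a {mkCls u}) a))
    rw [h0] at this
    exact le_antisymm this bot_le
  have hprime : ∀ q : H, MAtom q → PrimeLike q := by
    intro q hq
    refine hp q ⟨hq.1, fun a b hab => ?_⟩
    obtain ⟨z, hz, hqz⟩ := (dvdP_atom_iff hq).1 hab
    obtain ⟨s, hs⟩ := ZpSet_nonempty hH a
    obtain ⟨t, ht'⟩ := ZpSet_nonempty hH b
    have := tpEl_eq_zero_iff.1 (ht q hq (a * b)) ⟨z, hz, Multiset.singleton_le.2 hqz⟩ _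
      (ZpSet_add hs ht')
    rcases Multiset.mem_add.1 (Multiset.singleton_le.1 this) with h | h
    · exact Or.inl ((dvdP_atom_iff hq).2 ⟨s, hs, h⟩)
    · exact Or.inr ((dvdP_atom_iff hq).2 ⟨t, ht', h⟩)
  refine ⟨hH, fun k l u v hu hv huv => ?_⟩
  rw [← clsList_ofFn_eq]
  have hs : clsList (List.ofFn u) ∈ ZpSet (List.ofFn u).prod :=
    ⟨1, List.ofFn u, by simpa [List.mem_ofFn] using hu, by simp, rfl⟩
  have hs' : clsList (List.ofFn v) ∈ ZpSet (List.ofFn u).prod :=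
    ⟨1, List.ofFn v, by simpa [List.mem_ofFn] using hv, by simp [huv], rfl⟩
  have hc : ∀ q : H, MAtom q → (clsList (List.ofFn u)).count (mkCls q) =
      (clsList (List.ofFn v)).count (mkCls q) := by
    intro q hq
    obtain ⟨n, hn⟩ := (hprime q hq).2 (List.ofFn u).prod
    have e1 := (mem_Vq_iff (q := q)).2 ⟨_, hs, rfl⟩
    have e2 := (mem_Vq_iff (q := q)).2 ⟨_, hs', rfl⟩
    rw [hn] at e1 e2
    exact e1.trans e2.symm
  ext c
  by_cases h1 : c ∈ clsList (List.ofFn u)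
  · rw [clsList_ofFn] at h1
    obtain ⟨i, -, rfl⟩ := Multiset.mem_map.1 h1
    exact hc _ (hu i)
  by_cases h2 : c ∈ clsList (List.ofFn v)
  · rw [clsList_ofFn] at h2
    obtain ⟨i, -, rfl⟩ := Multiset.mem_map.1 h2
    exact hc _ (hv i)
  rw [Multiset.count_eq_zero_of_notMem h1, Multiset.count_eq_zero_of_notMem h2]

theorem tpMon_le {H : Type*} [Monoid H] : tpMon H ≤ tpZpMon H := by
  refine iSup_le fun u => iSup_le fun hu => iSup_le fun a => ?_
  exact le_iSup_of_le a (le_iSup_of_le {mkCls u}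
    (le_iSup_of_le ⟨u, 1, [u], by simpa using hu, by simp, rfl⟩ le_rfl))

theorem PF_tpZpMon {H : Type*} [CancelMonoid H] (h : PermutablyFactorial H) :
    tpZpMon H = 0 := by
  apply le_antisymm _ bot_le
  refine iSup_le fun a => iSup_le fun x => iSup_le fun _ => ?_
  refine (tpEl_eq_zero_iff.2 ?_).le
  rintro ⟨z₀, hz₀, hx⟩ z hz
  rwa [PF_ZpSet h hz hz₀]

theorem PF_primeLike {H : Type*} [CancelMonoid H] (h : PermutablyFactorial H) (q : H)
    (hq : APLike q) : PrimeLike q := by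
  classical
  refine ⟨hq, fun a => ?_⟩
  obtain ⟨s, hs⟩ := ZpSet_nonempty h.1 a
  refine ⟨s.count (mkCls q), ?_⟩
  ext n
  rw [mem_Vq_iff, Set.mem_singleton_iff]
  constructor
  · rintro ⟨t, ht, rfl⟩
    rw [PF_ZpSet h hs ht]
  · rintro rfl
    exact ⟨s, hs, rfl⟩

/-- For an atomic cancellative monoid `H`: `H` is permutably factorial
iff `t_p(H) = 0` and every almost prime-like element is prime-like, iff
`t_p(H, Z_p(H)) = 0` and every almost prime-like element is prime-like. -/
theorem permutablyFactorial_iff_tame {H : Type*} [CancelMonoid H] (hH : Atomic H) :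
    (PermutablyFactorial H ↔ (tpMon H = 0 ∧ ∀ q : H, APLike q → PrimeLike q)) ∧
    (PermutablyFactorial H ↔ (tpZpMon H = 0 ∧ ∀ q : H, APLike q → PrimeLike q)) := by
  have z : PermutablyFactorial H → tpMon H = 0 := fun h =>
    le_antisymm (tpMon_le.trans (PF_tpZpMon h).le) bot_le
  refine ⟨⟨fun h => ⟨z h, PF_primeLike h⟩, fun h => PF_of_tpMon hH h.1 h.2⟩,
    ⟨fun h => ⟨PF_tpZpMon h, PF_primeLike h⟩, fun h => PF_of_tpMon hH ?_ h.2⟩⟩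
  exact le_antisymm (tpMon_le.trans h.1.le) bot_le
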